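/- Harmonicity is preserved by the modified bracket: Let f₁, f₂ : ℝ × ℝ → ℝ be smooth functions of (u, v) satisfying ∂²fⱼ/∂u∂v = 0 everywhere, and let g₁, g₂, h₁, h₂ : ℝ → ℝ be smooth. Define f̂(u, v) := g₁(u)·∂f₂/∂u(u,v) + h₁(v)·∂f₂/∂v(u,v) − g₂(u)·∂f₁/∂u(u,v) − h₂(v)·∂f₁/∂v(u,v). Then ∂²f̂/∂u∂v = 0 everywhere. -/

import Mathlib

theorem harmonic_split (f : ℝ → ℝ → ℝ)
    (hf : ContDiff ℝ (⊤ : ℕ∞) (fun q : ℝ × ℝ => f q.1 q.2))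
    (hmix : ∀ u v : ℝ, deriv (fun v' => deriv (fun u' => f u' v') u) v = 0) :
    ∃ A B : ℝ → ℝ, (∀ u v, deriv (fun u' => f u' v) u = A u) ∧
      (∀ u v, deriv (fun v' => f u v') v = B v) := by
  have hd : Differentiable ℝ (fun q : ℝ × ℝ => f q.1 q.2) := hf.differentiable (by simp)
  have hdu : ∀ v, Differentiable ℝ (fun u => f u v) := fun v =>
    hd.comp (f := fun u : ℝ => (u, v)) (by fun_prop)
  have hfd : ∀ u v, deriv (fun u' => f u' v) u
      = fderiv ℝ (fun q : ℝ × ℝ => f q.1 q.2) (u, v) (1, 0) := by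
    intro u v
    have h1 : HasDerivAt (fun u' : ℝ => (u', v)) ((1 : ℝ), (0 : ℝ)) u :=
      (hasDerivAt_id u).prodMk (hasDerivAt_const u v)
    exact ((hd (u, v)).hasFDerivAt.comp_hasDerivAt u h1).deriv
  have hd2 : Differentiable ℝ (fderiv ℝ (fun q : ℝ × ℝ => f q.1 q.2)) :=
    ((hf.of_le (WithTop.coe_le_coe.2 (le_top : (2 : ℕ∞) ≤ ⊤)) : ContDiff ℝ 2 _).fderiv_right (m := 1)
      (by norm_num)).differentiable (by simp)
  have hA : ∀ u v, deriv (fun u' => f u' v) u = deriv (fun u' => f u' 0) u := by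
    intro u v
    refine is_const_of_deriv_eq_zero (f := fun v' => deriv (fun u' => f u' v') u) ?_
      (hmix u) v 0
    simp only [hfd]
    have h2 : Differentiable ℝ
        (fun v : ℝ => fderiv ℝ (fun q : ℝ × ℝ => f q.1 q.2) (u, v)) :=
      hd2.comp (f := fun v : ℝ => (u, v)) (by fun_prop)
    exact h2.clm_apply (differentiable_const _)
  refine ⟨fun u => deriv (fun u' => f u' 0) u, fun v => deriv (fun v' => f 0 v') v, hA, ?_⟩
  intro u v
  have h3 : (fun v' => f u v') = fun v' => f 0 v' + (f u 0 - f 0 0) := by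
    funext v'
    have := is_const_of_deriv_eq_zero (f := fun u' => f u' v' - f u' 0)
      ((hdu v').sub (hdu 0)) (fun x => by
        rw [deriv_fun_sub (hdu v' x) (hdu 0 x), hA x v', sub_self]) u 0
    linarith
  rw [h3, deriv_add_const]

/-- Harmonicity is preserved by the modified bracket: if `f₁, f₂` are smooth
solutions of `∂²f/∂u∂v = 0` and `g₁, g₂, h₁, h₂` are smooth, then
`f̂(u,v) = g₁(u)∂_u f₂ + h₁(v)∂_v f₂ − g₂(u)∂_u f₁ − h₂(v)∂_v f₁`
again satisfies `∂²f̂/∂u∂v = 0`. -/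
theorem stmt_11 (f₁ f₂ : ℝ → ℝ → ℝ)
    (hf₁ : ContDiff ℝ (⊤ : ℕ∞) (fun q : ℝ × ℝ => f₁ q.1 q.2))
    (hf₂ : ContDiff ℝ (⊤ : ℕ∞) (fun q : ℝ × ℝ => f₂ q.1 q.2))
    (g₁ g₂ h₁ h₂ : ℝ → ℝ)
    (hg₁ : ContDiff ℝ (⊤ : ℕ∞) g₁) (hg₂ : ContDiff ℝ (⊤ : ℕ∞) g₂)
    (hh₁ : ContDiff ℝ (⊤ : ℕ∞) h₁) (hh₂ : ContDiff ℝ (⊤ : ℕ∞) h₂)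
    (hmix₁ : ∀ u v : ℝ, deriv (fun v' => deriv (fun u' => f₁ u' v') u) v = 0)
    (hmix₂ : ∀ u v : ℝ, deriv (fun v' => deriv (fun u' => f₂ u' v') u) v = 0)
    (fhat : ℝ → ℝ → ℝ)
    (hfhat : ∀ u v : ℝ, fhat u v =
      g₁ u * deriv (fun u' => f₂ u' v) u + h₁ v * deriv (fun v' => f₂ u v') v
        - g₂ u * deriv (fun u' => f₁ u' v) u - h₂ v * deriv (fun v' => f₁ u v') v) :
    ∀ u v : ℝ, deriv (fun v' => deriv (fun u' => fhat u' v') u) v = 0 := by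
  obtain ⟨A1, B1, hA1, hB1⟩ := harmonic_split f₁ hf₁ hmix₁
  obtain ⟨A2, B2, hA2, hB2⟩ := harmonic_split f₂ hf₂ hmix₂
  intro u v
  have key : ∀ v', deriv (fun u' => fhat u' v') u
      = deriv (fun u' => g₁ u' * A2 u' - g₂ u' * A1 u') u := by
    intro v'
    have : (fun u' => fhat u' v') = fun u' =>
        (g₁ u' * A2 u' - g₂ u' * A1 u') + (h₁ v' * B2 v' - h₂ v' * B1 v') := by
      funext u'
      rw [hfhat, hA1, hA2, hB1, hB2]
      ring
    rw [this, deriv_add_const]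
  simp only [key, deriv_const]
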